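/- Let X be a simplicial complex on a finite vertex set V and let K ⊆ V. Then the inclusion of the barycentric subdivision sd(X^∨[V \ K]) = Δ(X^∨[V \ K] \ {∅}) into the order complex Z_K = Δ(X^∨ \ X^∨[K]) is a homotopy equivalence; in particular Z_K is homotopy equivalent to X^∨[V \ K]. A deformation retraction is induced by the simplicial map sending a vertex σ of Z_K to the vertex σ \ K. -/

import Mathlib

open Finset

/-- An abstract simplicial complex on the vertex type `V`: a set of finite subsets
("simplices") closed under taking subsets. -/
def IsComplex {V : Type*} (X : Set (Finset V)) : Prop :=
  ∀ σ ∈ X, ∀ τ, τ ⊆ σ → τ ∈ X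

variable {V : Type*}

/-- The induced subcomplex `X[S] = {σ ∈ X : σ ⊆ S}`. -/
def induce (X : Set (Finset V)) (S : Finset V) : Set (Finset V) :=
  {σ | σ ∈ X ∧ σ ⊆ S}

/-- The link `lk(X,τ) = {σ : σ ∪ τ ∈ X, σ ∩ τ = ∅}`; it is the void complex if `τ ∉ X`. -/
def link [DecidableEq V] (X : Set (Finset V)) (τ : Finset V) : Set (Finset V) :=
  {σ | σ ∪ τ ∈ X ∧ Disjoint σ τ}

/-- The star `str(X,τ) = {σ ∈ X : σ ∪ τ ∈ X}`. -/
def star [DecidableEq V] (X : Set (Finset V)) (τ : Finset V) : Set (Finset V) :=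
  {σ | σ ∈ X ∧ σ ∪ τ ∈ X}

/-- The Alexander dual `X^∨ = {A ⊆ V : V \ A ∉ X}` of a complex on the finite vertex set
`V`. -/
def alexDual [Fintype V] [DecidableEq V] (X : Set (Finset V)) : Set (Finset V) :=
  {A | Aᶜ ∉ X}


/-- The order complex `Δ(P)` of a subset `P` of a poset: the complex of finite chains
contained in `P`. -/
def orderComplex {α : Type*} [Preorder α] (P : Set α) : Set (Finset α) :=
  {C | ↑C ⊆ P ∧ IsChain (· ≤ ·) (↑C : Set α)}

/-- For `K ⊆ V`, the complex `Z_K = Δ(X^∨ \ X^∨[K])`: the order complex of the poset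
(ordered by inclusion) of simplices of `X^∨` not contained in `K`. -/
def ZComplex {V : Type*} [Fintype V] [DecidableEq V] (X : Set (Finset V)) (K : Set V) :
    Set (Finset (Finset V)) :=
  orderComplex {σ : Finset V | σ ∈ alexDual X ∧ ¬ (↑σ : Set V) ⊆ K}

/-- The geometric realization `|Z|` of a simplicial complex `Z` on the vertex type `W`,
as a subspace of `W → ℝ`: the points supported on a simplex of `Z`, with nonnegative
coordinates summing to `1`. -/
def geomRel {W : Type*} (Z : Set (Finset W)) : Set (W → ℝ) :=
  {f | ∃ σ ∈ Z, (∀ w, 0 ≤ f w) ∧ (∀ w, f w ≠ 0 → w ∈ σ) ∧ ∑ w ∈ σ, f w = 1}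

/-!
Write `P = X^∨[V \ K] \ {∅}` and `Q = X^∨ \ X^∨[K]`. The map `σ ↦ σ \ K` is monotone, lies below
the identity and retracts `Q` onto `P`. Monotone maps `f ≤ g` of finite posets have homotopic
realizations: lowering the values of `g` to those of `f` one point at a time, always at a minimal
point where they still differ, every step replaces a map by a contiguous one, and contiguous maps
are joined by straight lines.

The realization of a complex `Y` and that of its barycentric subdivision are related by sending
`σ` to its barycentre, with homotopy inverse spreading a point `y` over the superlevel sets of its
coordinates. Both composites stay, pointwise, in a common simplex with the identity.
-/

section Realization

variable {W A : Type*} {Z : Set (Finset W)}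

/-- The closed face of the standard simplex on the vertex type `W` spanned by the finite set `σ`:
the realization of a complex is the union of the closed faces of its simplices. -/
def closedFace (σ : Finset W) : Set (W → ℝ) :=
  {f | (∀ w, 0 ≤ f w) ∧ (∀ w, f w ≠ 0 → w ∈ σ) ∧ ∑ w ∈ σ, f w = 1}

lemma convex_closedFace (σ : Finset W) : Convex ℝ (closedFace σ) := by
  rintro f ⟨hf₀, hfσ, hf₁⟩ g ⟨hg₀, hgσ, hg₁⟩ a b ha hb hab
  refine ⟨fun w ↦ add_nonneg (mul_nonneg ha (hf₀ w)) (mul_nonneg hb (hg₀ w)), fun w hw ↦ ?_, ?_⟩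
  · by_contra hwσ
    have hfw : f w = 0 := not_imp_comm.1 (hfσ w) hwσ
    have hgw : g w = 0 := not_imp_comm.1 (hgσ w) hwσ
    simp [hfw, hgw] at hw
  · simp [sum_add_distrib, ← mul_sum, hf₁, hg₁, hab]

lemma mem_closedFace_of_mem_geomRel {f : W → ℝ} (hf : f ∈ geomRel Z) {σ : Finset W}
    (hσ : f.support ⊆ σ) : f ∈ closedFace σ := by
  obtain ⟨τ, -, hf₀, hfτ, hf₁⟩ := hf
  refine ⟨hf₀, hσ, ?_⟩
  rw [← hf₁, ← finsum_eq_sum_of_support_subset f hσ, ← finsum_eq_sum_of_support_subset f hfτ]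

lemma mem_geomRel_iff [Fintype W] {f : W → ℝ} :
    f ∈ geomRel Z ↔ f ∈ stdSimplex ℝ W ∧ ∃ σ ∈ Z, f.support ⊆ σ := by
  constructor
  · intro hf
    obtain ⟨hf₀, -, hf₁⟩ := mem_closedFace_of_mem_geomRel hf (σ := univ) (by simp)
    obtain ⟨σ, hσ, -, hfσ, -⟩ := hf
    exact ⟨⟨hf₀, hf₁⟩, σ, hσ, hfσ⟩
  · rintro ⟨⟨hf₀, hf₁⟩, σ, hσ, hfσ⟩
    refine ⟨σ, hσ, hf₀, hfσ, ?_⟩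
    rw [← hf₁, ← finsum_eq_sum_of_support_subset f hfσ, finsum_eq_sum_of_fintype]

lemma geomRel_mono {Z₁ Z₂ : Set (Finset W)} (h : Z₁ ⊆ Z₂) : geomRel Z₁ ⊆ geomRel Z₂ :=
  fun _ ⟨σ, hσ, hf⟩ ↦ ⟨σ, h hσ, hf⟩

theorem homotopic_of_forall_exists_common_simplex [TopologicalSpace A] (f g : C(A, geomRel Z))
    (h : ∀ a, ∃ σ ∈ Z, (f a).1.support ⊆ σ ∧ (g a).1.support ⊆ σ) : f.Homotopic g := by
  have lineMap_mem (p : unitInterval × A) :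
      AffineMap.lineMap (f p.2).1 (g p.2).1 (p.1 : ℝ) ∈ geomRel Z := by
    obtain ⟨σ, hσ, hfσ, hgσ⟩ := h p.2
    exact ⟨σ, hσ, (convex_closedFace σ).lineMap_mem
      (mem_closedFace_of_mem_geomRel (f p.2).2 hfσ)
      (mem_closedFace_of_mem_geomRel (g p.2).2 hgσ) p.1.2⟩
  exact ⟨{
    toFun := fun p ↦ ⟨_, lineMap_mem p⟩
    continuous_toFun := by
      simp only [AffineMap.lineMap_apply]
      fun_prop
    map_zero_left := fun a ↦ Subtype.ext (AffineMap.lineMap_apply_zero _ _)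
    map_one_left := fun a ↦ Subtype.ext (AffineMap.lineMap_apply_one _ _) }⟩

end Realization

section SimplicialMap

variable {W W' : Type*} {Z : Set (Finset W)} {Z' : Set (Finset W')} {f g : W → W'}

section Linear

variable [Finite W] [Finite W']

lemma support_linearMap_subset (f : W → W') (x : W → ℝ) :
    (FunOnFinite.linearMap ℝ ℝ f x).support ⊆ f '' x.support := by
  classical
  have := Fintype.ofFinite W
  have := Fintype.ofFinite W'
  intro w hw
  rw [Function.mem_support, FunOnFinite.linearMap_apply_apply] at hw
  obtain ⟨v, hv, hxv⟩ := exists_ne_zero_of_sum_ne_zero hw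
  exact ⟨v, hxv, (mem_filter.1 hv).2⟩

lemma linearMap_congr_of_eqOn_support {x : W → ℝ} (h : Set.EqOn f g x.support) :
    FunOnFinite.linearMap ℝ ℝ f x = FunOnFinite.linearMap ℝ ℝ g x := by
  classical
  have := Fintype.ofFinite W
  have := Fintype.ofFinite W'
  ext w
  simp only [FunOnFinite.linearMap_apply_apply, sum_filter]
  refine sum_congr rfl fun v _ ↦ ?_
  by_cases hv : x v = 0
  · simp [hv]
  · rw [h hv]

end Linear

variable [DecidableEq W']

/-- A vertex map `f` is simplicial from the complex `Z` to the complex `Z'` if it takes simplices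
to simplices. -/
def IsSimplicialMap (Z : Set (Finset W)) (Z' : Set (Finset W')) (f : W → W') : Prop :=
  ∀ σ ∈ Z, σ.image f ∈ Z'

/-- Two vertex maps are contiguous if the images of every simplex of `Z` span a common simplex
of `Z'`; this makes the induced maps of realizations homotopic. -/
def AreContiguous (Z : Set (Finset W)) (Z' : Set (Finset W')) (f g : W → W') : Prop :=
  ∀ σ ∈ Z, σ.image f ∪ σ.image g ∈ Z'

variable [Finite W] [Finite W']

lemma IsSimplicialMap.linearMap_mem_geomRel (hf : IsSimplicialMap Z Z' f) {x : W → ℝ}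
    (hx : x ∈ geomRel Z) : FunOnFinite.linearMap ℝ ℝ f x ∈ geomRel Z' := by
  have := Fintype.ofFinite W
  have := Fintype.ofFinite W'
  obtain ⟨hx, σ, hσ, hxσ⟩ := mem_geomRel_iff.1 hx
  refine mem_geomRel_iff.2 ⟨stdSimplex.image_linearMap f ⟨_, hx, rfl⟩, _, hf σ hσ, ?_⟩
  rw [coe_image]
  exact (support_linearMap_subset f x).trans (Set.image_mono hxσ)

/-- The affine extension of a simplicial map to a continuous map of realizations. -/
noncomputable def IsSimplicialMap.realization (hf : IsSimplicialMap Z Z' f) :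
    C(geomRel Z, geomRel Z') where
  toFun x := ⟨FunOnFinite.linearMap ℝ ℝ f x, hf.linearMap_mem_geomRel x.2⟩
  continuous_toFun :=
    ((FunOnFinite.continuous_linearMap ℝ ℝ f).comp continuous_subtype_val).subtype_mk _

theorem AreContiguous.homotopic_realization (h : AreContiguous Z Z' f g)
    (hf : IsSimplicialMap Z Z' f) (hg : IsSimplicialMap Z Z' g) :
    hf.realization.Homotopic hg.realization := by
  have := Fintype.ofFinite W
  refine homotopic_of_forall_exists_common_simplex _ _ fun x ↦ ?_
  obtain ⟨-, σ, hσ, hxσ⟩ := mem_geomRel_iff.1 x.2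
  refine ⟨_, h σ hσ, ?_⟩
  simp only [coe_union, coe_image]
  exact ⟨(support_linearMap_subset f x).trans
      ((Set.image_mono hxσ).trans Set.subset_union_left),
    (support_linearMap_subset g x).trans ((Set.image_mono hxσ).trans Set.subset_union_right)⟩

end SimplicialMap

section OrderComplex

variable {α β : Type*}

lemma orderComplex_mono [Preorder α] {P Q : Set α} (h : P ⊆ Q) :
    orderComplex P ⊆ orderComplex Q :=
  fun _ ⟨hσ, hchain⟩ ↦ ⟨hσ.trans h, hchain⟩

lemma mem_geomRel_orderComplex_iff [Fintype α] [Preorder α] {P : Set α} {x : α → ℝ} :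
    x ∈ geomRel (orderComplex P) ↔
      x ∈ stdSimplex ℝ α ∧ x.support ⊆ P ∧ IsChain (· ≤ ·) x.support := by
  rw [mem_geomRel_iff]
  refine and_congr_right fun _ ↦ ⟨?_, fun ⟨hP, hchain⟩ ↦ ?_⟩
  · rintro ⟨σ, ⟨hσP, hchain⟩, hxσ⟩
    exact ⟨hxσ.trans hσP, hchain.mono hxσ⟩
  · refine ⟨x.support.toFinite.toFinset, ?_, by simp⟩
    simpa [orderComplex] using ⟨hP, hchain⟩

section Preorder

variable [Preorder α] [Preorder β] [DecidableEq β] {P : Set α} {Q : Set β} {f g : α → β}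

lemma isSimplicialMap_orderComplex (hf : MonotoneOn f P) (hfQ : Set.MapsTo f P Q) :
    IsSimplicialMap (orderComplex P) (orderComplex Q) f := by
  rintro σ ⟨hσP, hchain⟩
  refine ⟨by simpa using (hfQ.mono_left hσP).image_subset, ?_⟩
  rw [coe_image]
  rintro _ ⟨a, ha, rfl⟩ _ ⟨b, hb, rfl⟩ -
  exact (hchain.total ha hb).imp (hf (hσP ha) (hσP hb)) (hf (hσP hb) (hσP ha))

lemma areContiguous_orderComplex_of_eqOn_ne (hf : MonotoneOn f P) (hg : MonotoneOn g P)
    (hfQ : Set.MapsTo f P Q) (hgQ : Set.MapsTo g P Q) (hle : ∀ a ∈ P, f a ≤ g a) (m : α)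
    (heq : ∀ a ∈ P, a ≠ m → f a = g a) :
    AreContiguous (orderComplex P) (orderComplex Q) f g := by
  rintro σ ⟨hσP, hchain⟩
  have comparable {a b : α} (ha : a ∈ σ) (hb : b ∈ σ) : f a ≤ g b ∨ g b ≤ f a := by
    have haP := hσP ha
    have hbP := hσP hb
    rcases hchain.total ha hb with hab | hba
    · exact .inl ((hle a haP).trans (hg haP hbP hab))
    · by_cases ham : a = m
      · by_cases hbm : b = m
        · exact .inl ((hle a haP).trans_eq (by rw [ham, hbm]))
        · exact .inr (heq b hbP hbm ▸ hf hbP haP hba)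
      · exact .inr (heq a haP ham ▸ hg hbP haP hba)
  have hfσ := isSimplicialMap_orderComplex hf hfQ σ ⟨hσP, hchain⟩
  have hgσ := isSimplicialMap_orderComplex hg hgQ σ ⟨hσP, hchain⟩
  rw [orderComplex, Set.mem_ofPred_eq, coe_union]
  refine ⟨Set.union_subset hfσ.1 hgσ.1, ?_⟩
  rintro x (hx | hx) y (hy | hy) hxy
  · exact hfσ.2 hx hy hxy
  · obtain ⟨a, ha, rfl⟩ := mem_image.1 hx
    obtain ⟨b, hb, rfl⟩ := mem_image.1 hy
    exact comparable ha hb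
  · obtain ⟨b, hb, rfl⟩ := mem_image.1 hx
    obtain ⟨a, ha, rfl⟩ := mem_image.1 hy
    exact (comparable ha hb).symm
  · exact hgσ.2 hx hy hxy

lemma realization_orderComplex_congr [Finite α] [Finite β]
    (hf : IsSimplicialMap (orderComplex P) (orderComplex Q) f)
    (hg : IsSimplicialMap (orderComplex P) (orderComplex Q) g) (heq : Set.EqOn f g P) :
    hf.realization = hg.realization := by
  have := Fintype.ofFinite α
  exact ContinuousMap.ext fun x ↦ Subtype.ext <| linearMap_congr_of_eqOn_support <|
    heq.mono (mem_geomRel_orderComplex_iff.1 x.2).2.1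

end Preorder

section PartialOrder

variable [PartialOrder α] {P Q : Set α}

lemma monotoneOn_update [DecidableEq α] [Preorder β] {f g : α → β} (hf : MonotoneOn f P)
    (hg : MonotoneOn g P) {m : α} (hm : m ∈ P) (hle : f m ≤ g m)
    (heq : ∀ a ∈ P, a < m → f a = g a) : MonotoneOn (Function.update g m (f m)) P := by
  intro a ha b hb hab
  by_cases ham : a = m <;> by_cases hbm : b = m
  · rw [ham, hbm]
  · subst ham
    simpa [hbm] using hle.trans (hg ha hb hab)
  · subst hbm
    simpa [ham] using heq a ha (hab.lt_of_ne ham) ▸ hf ha hb hab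
  · simpa [ham, hbm] using hg ha hb hab

theorem homotopic_realization_of_le [Finite α] [Finite β] [Preorder β] [DecidableEq β]
    {R : Set β} {f g : α → β} (hf : MonotoneOn f P) (hg : MonotoneOn g P)
    (hfR : Set.MapsTo f P R) (hgR : Set.MapsTo g P R) (hle : ∀ a ∈ P, f a ≤ g a) :
    (isSimplicialMap_orderComplex hf hfR).realization.Homotopic
      (isSimplicialMap_orderComplex hg hgR).realization := by
  classical
  have := Fintype.ofFinite α
  induction hD : ({a | a ∈ P ∧ f a ≠ g a} : Finset α) using Finset.strongInduction
    generalizing g with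
  | H D ih =>
  subst hD
  rcases ({a | a ∈ P ∧ f a ≠ g a} : Finset α).eq_empty_or_nonempty with hempty | hne
  · have heqOn : Set.EqOn f g P := fun a ha ↦ by
      simpa [ha] using Finset.ext_iff.1 hempty a
    exact realization_orderComplex_congr _ _ heqOn ▸ .refl _
  · obtain ⟨m, hm⟩ := exists_minimal hne
    obtain ⟨hmP, -⟩ : m ∈ P ∧ f m ≠ g m := by simpa using hm.prop
    have heq_below : ∀ a ∈ P, a < m → f a = g a := fun a ha ham ↦ by
      simpa [ha] using hm.not_prop_of_lt ham
    set g' := Function.update g m (f m)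
    have hg'_ne {a : α} (ha : a ≠ m) : g' a = g a := Function.update_of_ne ha _ _
    have hg'_self : g' m = f m := Function.update_self ..
    have hg'_eq_or (a : α) : g' a = f a ∨ g' a = g a :=
      (eq_or_ne a m).imp (fun ham ↦ by rw [ham, hg'_self]) hg'_ne
    have hg' : MonotoneOn g' P := monotoneOn_update hf hg hmP (hle m hmP) heq_below
    have hg'R : Set.MapsTo g' P R := fun a ha ↦
      (hg'_eq_or a).elim (fun h ↦ h ▸ hfR ha) (fun h ↦ h ▸ hgR ha)
    have hfg' : ∀ a ∈ P, f a ≤ g' a := fun a ha ↦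
      (hg'_eq_or a).elim Eq.ge (fun h ↦ h ▸ hle a ha)
    have hg'g : ∀ a ∈ P, g' a ≤ g a := fun a ha ↦
      (hg'_eq_or a).elim (fun h ↦ h ▸ hle a ha) Eq.le
    have hdiff : ({a | a ∈ P ∧ f a ≠ g' a} : Finset α) ⊂
        ({a | a ∈ P ∧ f a ≠ g a} : Finset α) := by
      refine (Finset.ssubset_iff_of_subset fun a ↦ ?_).2 ⟨m, hm.prop, by simp [hg'_self]⟩
      rcases eq_or_ne a m with rfl | ham
      · simp [hg'_self]
      · simp [hg'_ne ham]
    exact (ih _ hdiff hg' hg'R hfg' rfl).trans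
      ((areContiguous_orderComplex_of_eqOn_ne hg' hg hg'R hgR hg'g m
        fun _ _ ↦ hg'_ne).homotopic_realization _ _)

/-- A monotone retraction `c` of the subset `Q` of a poset onto `P ⊆ Q` lying below the identity,
as for kernel (interior) operators. It induces a deformation retraction of order complexes. -/
structure IsKernelRetraction (c : α → α) (Q P : Set α) : Prop where
  subset : P ⊆ Q
  mapsTo : Set.MapsTo c Q P
  monotoneOn : MonotoneOn c Q
  le : ∀ a ∈ Q, c a ≤ a
  eqOn : Set.EqOn c id P

namespace IsKernelRetraction

variable {c : α → α}

lemma geomRel_subset (h : IsKernelRetraction c Q P) :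
    geomRel (orderComplex P) ⊆ geomRel (orderComplex Q) :=
  geomRel_mono (orderComplex_mono h.subset)

variable [Finite α] [DecidableEq α]

/-- The map of realizations induced by `c`. -/
noncomputable def retraction (h : IsKernelRetraction c Q P) :
    C(geomRel (orderComplex Q), geomRel (orderComplex P)) :=
  (isSimplicialMap_orderComplex h.monotoneOn h.mapsTo).realization

lemma retraction_apply_of_mem (h : IsKernelRetraction c Q P) (y : geomRel (orderComplex P)) :
    h.retraction ⟨y, h.geomRel_subset y.2⟩ = y := by
  have := Fintype.ofFinite α
  refine Subtype.ext ((linearMap_congr_of_eqOn_support (g := id) ?_).trans (by simp))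
  exact h.eqOn.mono (mem_geomRel_orderComplex_iff.1 y.2).2.1

/-- The inclusion of the realization of the order complex of `P` into that of `Q`. -/
def inclusion (h : IsKernelRetraction c Q P) :
    C(geomRel (orderComplex P), geomRel (orderComplex Q)) :=
  ⟨Set.inclusion h.geomRel_subset, continuous_inclusion h.geomRel_subset⟩

lemma retraction_comp_inclusion (h : IsKernelRetraction c Q P) :
    h.retraction.comp h.inclusion = .id _ :=
  ContinuousMap.ext h.retraction_apply_of_mem

theorem inclusion_comp_retraction_homotopic (h : IsKernelRetraction c Q P) :
    (h.inclusion.comp h.retraction).Homotopic (.id _) := by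
  have hid : (isSimplicialMap_orderComplex monotoneOn_id (Set.mapsTo_id Q)).realization =
      .id (geomRel (orderComplex Q)) :=
    ContinuousMap.ext fun x ↦ Subtype.ext (by simp [IsSimplicialMap.realization])
  rw [← hid]
  exact homotopic_realization_of_le h.monotoneOn monotoneOn_id
    (h.mapsTo.mono_right h.subset) (Set.mapsTo_id Q) h.le

/-- The inclusion of order complexes, as a homotopy equivalence with inverse the retraction. -/
noncomputable def homotopyEquiv (h : IsKernelRetraction c Q P) :
    ContinuousMap.HomotopyEquiv (geomRel (orderComplex P)) (geomRel (orderComplex Q)) where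
  toFun := h.inclusion
  invFun := h.retraction
  left_inv := h.retraction_comp_inclusion ▸ .refl _
  right_inv := h.inclusion_comp_retraction_homotopic

end IsKernelRetraction

end PartialOrder

end OrderComplex

section BarycentricSubdivision

lemma exists_isGreatest_of_isChain {α : Type*} [Preorder α] {s : Set α}
    (hchain : IsChain (· ≤ ·) s) (hfin : s.Finite) (hne : s.Nonempty) :
    ∃ m, IsGreatest s m := by
  obtain ⟨m, hm⟩ := hfin.exists_maximal hne
  exact ⟨m, hm.prop, hchain.directedOn.is_top_of_is_max hm.prop fun _ ha ↦ hm.le_of_ge ha⟩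

/-- The barycentric subdivision `sd(Y) = Δ(Y \ {∅})`. -/
abbrev barycentricSubdivision (Y : Set (Finset V)) : Set (Finset (Finset V)) :=
  orderComplex {σ | σ ∈ Y ∧ σ ≠ ∅}

variable [Fintype V] [DecidableEq V] {Y : Set (Finset V)} {x : Finset V → ℝ} {y : V → ℝ}

/-- The affine map sending the vertex `σ` to its barycentre. -/
noncomputable def barycentricMap (x : Finset V → ℝ) (v : V) : ℝ :=
  ∑ σ with v ∈ σ, x σ / #σ

lemma sum_barycentricMap (hx : x ∅ = 0) : ∑ v, barycentricMap x v = ∑ σ, x σ := by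
  simp only [barycentricMap, sum_filter]
  rw [sum_comm]
  refine sum_congr rfl fun σ _ ↦ ?_
  rcases σ.eq_empty_or_nonempty with rfl | hσ
  · simp [hx]
  · have : (#σ : ℝ) ≠ 0 := by simpa using hσ.ne_empty
    simp only [sum_ite_mem, univ_inter, sum_const, nsmul_eq_mul]
    field_simp

lemma exists_mem_support_of_barycentricMap_ne_zero {v : V} (hv : barycentricMap x v ≠ 0) :
    ∃ σ ∈ x.support, v ∈ σ := by
  obtain ⟨σ, hσ, hne⟩ := exists_ne_zero_of_sum_ne_zero hv
  exact ⟨σ, (div_ne_zero_iff.1 hne).1, (mem_filter.1 hσ).2⟩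

lemma barycentricMap_le_of_comparable (hx : ∀ σ, 0 ≤ x σ) {τ : Finset V}
    (hτ : ∀ σ ∈ x.support, σ ⊆ τ ∨ τ ⊆ σ) {u v : V} (hu : u ∈ τ) (hv : v ∉ τ) :
    barycentricMap x v ≤ barycentricMap x u := by
  simp only [barycentricMap, sum_filter]
  refine sum_le_sum fun σ _ ↦ ?_
  have hnonneg : 0 ≤ x σ / #σ := div_nonneg (hx σ) (Nat.cast_nonneg _)
  by_cases hσ : x σ = 0
  · simp [hσ]
  · by_cases hvσ : v ∈ σ
    · have hτσ : τ ⊆ σ := (hτ σ hσ).resolve_left fun hστ ↦ hv (hστ hvσ)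
      rw [if_pos hvσ, if_pos (hτσ hu)]
    · rw [if_neg hvσ]
      exact ite_nonneg hnonneg le_rfl

lemma barycentricMap_mem_geomRel (hx : x ∈ geomRel (barycentricSubdivision Y)) :
    barycentricMap x ∈ geomRel Y := by
  obtain ⟨⟨hx₀, hx₁⟩, hxY, hchain⟩ := mem_geomRel_orderComplex_iff.1 hx
  have hempty : x ∅ = 0 := not_not.1 fun h ↦ (hxY h).2 rfl
  have hne : x.support.Nonempty := by
    obtain ⟨σ, -, hσ⟩ := exists_ne_zero_of_sum_ne_zero (hx₁.trans_ne one_ne_zero)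
    exact ⟨σ, hσ⟩
  obtain ⟨m, hm, hmax⟩ := exists_isGreatest_of_isChain hchain x.support.toFinite hne
  refine mem_geomRel_iff.2 ⟨⟨fun v ↦ ?_, (sum_barycentricMap hempty).trans hx₁⟩,
    m, (hxY hm).1, fun v hv ↦ ?_⟩
  · exact sum_nonneg fun σ _ ↦ div_nonneg (hx₀ σ) (Nat.cast_nonneg _)
  · obtain ⟨σ, hσ, hvσ⟩ := exists_mem_support_of_barycentricMap_ne_zero hv
    exact hmax hσ hvσ

/-- `τ` is a nonempty set on which `y` is positive and strictly larger than off `τ`. For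
nonnegative `y` these are the nonempty superlevel sets of `y` at positive levels. -/
def IsSuperlevel (y : V → ℝ) (τ : Finset V) : Prop :=
  τ.Nonempty ∧ ∀ v ∈ τ, 0 < y v ∧ ∀ u ∉ τ, y u < y v

omit [Fintype V] [DecidableEq V] in
lemma isChain_isSuperlevel (y : V → ℝ) : IsChain (· ≤ ·) {τ | IsSuperlevel y τ} := by
  intro σ hσ τ hτ _
  by_contra! h
  obtain ⟨v, hvσ, hvτ⟩ := not_subset.1 h.1
  obtain ⟨u, huτ, huσ⟩ := not_subset.1 h.2
  exact lt_asymm ((hσ.2 v hvσ).2 u huσ) ((hτ.2 u huτ).2 v hvτ)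

omit [DecidableEq V] in
lemma exists_isSuperlevel (hy : y ∈ stdSimplex ℝ V) : ∃ τ, IsSuperlevel y τ := by
  obtain ⟨w, -, hw⟩ := exists_ne_zero_of_sum_ne_zero (hy.2.trans_ne one_ne_zero)
  obtain ⟨m, -, hmax⟩ := exists_max_image univ y ⟨w, mem_univ w⟩
  have hpos : 0 < y m := ((hy.1 w).lt_of_ne' hw).trans_le (hmax w (mem_univ w))
  refine ⟨({v | y v = y m} : Finset V), ⟨m, by simp⟩, fun v hv ↦ ?_⟩
  rw [mem_filter_univ] at hv
  rw [hv]
  exact ⟨hpos, fun u hu ↦ (hmax u (mem_univ u)).lt_of_ne (by simpa using hu)⟩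

/-- A nonnegative weight depending continuously on `y` that is positive exactly on the sets `τ`
with `IsSuperlevel y τ`; the factor `#τ` excludes the empty set. -/
noncomputable def superlevelWeight (y : V → ℝ) (τ : Finset V) : ℝ :=
  #τ * ∏ v ∈ τ, (y v * ∏ u ∈ τᶜ, max 0 (y v - y u))

lemma superlevelWeight_nonneg (hy : ∀ v, 0 ≤ y v) (τ : Finset V) : 0 ≤ superlevelWeight y τ :=
  mul_nonneg (Nat.cast_nonneg _) <| prod_nonneg fun v _ ↦
    mul_nonneg (hy v) (prod_nonneg fun _ _ ↦ le_max_left _ _)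

lemma superlevelWeight_ne_zero_iff (hy : ∀ v, 0 ≤ y v) {τ : Finset V} :
    superlevelWeight y τ ≠ 0 ↔ IsSuperlevel y τ := by
  have max_ne_zero (v u : V) : max 0 (y v - y u) ≠ 0 ↔ y u < y v := by
    rw [Ne, max_eq_left_iff, sub_nonpos, not_le]
  simp only [superlevelWeight, IsSuperlevel, mul_ne_zero_iff, prod_ne_zero_iff, mem_compl,
    max_ne_zero, Nat.cast_ne_zero, card_ne_zero, fun v ↦ (hy v).lt_iff_ne']

lemma sum_superlevelWeight_pos (hy : y ∈ stdSimplex ℝ V) : 0 < ∑ τ, superlevelWeight y τ := by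
  obtain ⟨τ, hτ⟩ := exists_isSuperlevel hy
  exact sum_pos' (fun _ _ ↦ superlevelWeight_nonneg hy.1 _) ⟨τ, mem_univ τ,
    (superlevelWeight_nonneg hy.1 τ).lt_of_ne' ((superlevelWeight_ne_zero_iff hy.1).2 hτ)⟩

lemma continuous_superlevelWeight (τ : Finset V) :
    Continuous fun y : V → ℝ ↦ superlevelWeight y τ := by
  unfold superlevelWeight
  fun_prop

/-- The point of the subdivision with barycentric coordinates proportional to the weights of the
superlevel sets of `y`. -/
noncomputable def superlevelMap (y : V → ℝ) (τ : Finset V) : ℝ :=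
  superlevelWeight y τ / ∑ σ, superlevelWeight y σ

lemma isSuperlevel_of_mem_support_superlevelMap (hy : ∀ v, 0 ≤ y v) {τ : Finset V}
    (hτ : τ ∈ (superlevelMap y).support) : IsSuperlevel y τ :=
  (superlevelWeight_ne_zero_iff hy).1 (div_ne_zero_iff.1 hτ).1

lemma superlevelMap_mem_geomRel (hY : IsComplex Y) (hy : y ∈ geomRel Y) :
    superlevelMap y ∈ geomRel (barycentricSubdivision Y) := by
  obtain ⟨hy', σ, hσ, hyσ⟩ := mem_geomRel_iff.1 hy
  have hsupp := fun τ ↦ isSuperlevel_of_mem_support_superlevelMap hy'.1 (τ := τ)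
  have hpos := sum_superlevelWeight_pos hy'
  refine mem_geomRel_orderComplex_iff.2 ⟨⟨fun τ ↦ ?_, ?_⟩, fun τ hτ ↦ ?_,
    (isChain_isSuperlevel y).mono hsupp⟩
  · exact div_nonneg (superlevelWeight_nonneg hy'.1 τ) hpos.le
  · simp only [superlevelMap]
    rw [← sum_div, div_self hpos.ne']
  · obtain ⟨hne, hτy⟩ := hsupp τ hτ
    exact ⟨hY σ hσ τ fun v hv ↦ hyσ (hτy v hv).1.ne', hne.ne_empty⟩

/-- `barycentricMap` as a map of realizations. -/
noncomputable def fromSubdivision (Y : Set (Finset V)) :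
    C(geomRel (barycentricSubdivision Y), geomRel Y) where
  toFun x := ⟨barycentricMap x, barycentricMap_mem_geomRel x.2⟩
  continuous_toFun := .subtype_mk (continuous_pi fun _ ↦ continuous_finsetSum _ fun σ _ ↦
    ((continuous_apply σ).comp continuous_subtype_val).div_const _) _

/-- `superlevelMap` as a map of realizations. -/
noncomputable def toSubdivision (hY : IsComplex Y) :
    C(geomRel Y, geomRel (barycentricSubdivision Y)) where
  toFun y := ⟨superlevelMap y, superlevelMap_mem_geomRel hY y.2⟩
  continuous_toFun := by
    have hweight (τ : Finset V) : Continuous fun y : geomRel Y ↦ superlevelWeight y.1 τ :=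
      (continuous_superlevelWeight τ).comp continuous_subtype_val
    refine .subtype_mk (continuous_pi fun τ ↦ (hweight τ).div
      (continuous_finsetSum _ fun σ _ ↦ hweight σ) fun y ↦ ?_) _
    exact (sum_superlevelWeight_pos (mem_geomRel_iff.1 y.2).1).ne'

lemma isChain_support_union_isSuperlevel (hx : ∀ σ, 0 ≤ x σ)
    (hchain : IsChain (· ≤ ·) x.support) :
    IsChain (· ≤ ·) (x.support ∪ {τ | IsSuperlevel (barycentricMap x) τ}) := by
  have comparable {σ τ : Finset V} (hσ : σ ∈ x.support)
      (hτ : IsSuperlevel (barycentricMap x) τ) : σ ⊆ τ ∨ τ ⊆ σ := by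
    by_contra! h
    obtain ⟨u, huσ, huτ⟩ := not_subset.1 h.1
    obtain ⟨v, hvτ, hvσ⟩ := not_subset.1 h.2
    exact ((hτ.2 v hvτ).2 u huτ).not_ge
      (barycentricMap_le_of_comparable hx (fun ρ hρ ↦ hchain.total hρ hσ) huσ hvσ)
  rintro σ (hσ | hσ) τ (hτ | hτ) hne
  · exact hchain hσ hτ hne
  · exact comparable hσ hτ
  · exact (comparable hτ hσ).symm
  · exact isChain_isSuperlevel _ hσ hτ hne

lemma toSubdivision_comp_fromSubdivision_homotopic (hY : IsComplex Y) :
    ((toSubdivision hY).comp (fromSubdivision Y)).Homotopic (.id _) := by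
  refine homotopic_of_forall_exists_common_simplex _ _ fun x ↦ ?_
  obtain ⟨⟨hx₀, -⟩, hxY, hchain⟩ := mem_geomRel_orderComplex_iff.1 x.2
  set b := toSubdivision hY (fromSubdivision Y x)
  have hb : b.1.support ⊆ {τ | IsSuperlevel (barycentricMap x.1) τ} := fun τ ↦
    isSuperlevel_of_mem_support_superlevelMap (mem_geomRel_iff.1 (fromSubdivision Y x).2).1.1
  have hbY := (mem_geomRel_orderComplex_iff.1 b.2).2.1
  refine ⟨(b.1.support ∪ x.1.support).toFinite.toFinset, ⟨?_, ?_⟩, ?_, ?_⟩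
  · simpa using ⟨hbY, hxY⟩
  · rw [Set.Finite.coe_toFinset, Set.union_comm]
    exact (isChain_support_union_isSuperlevel hx₀ hchain).mono
      (Set.union_subset_union_right _ hb)
  · rw [Set.Finite.coe_toFinset]
    exact Set.subset_union_left
  · rw [Set.Finite.coe_toFinset]
    exact Set.subset_union_right

lemma fromSubdivision_comp_toSubdivision_homotopic (hY : IsComplex Y) :
    ((fromSubdivision Y).comp (toSubdivision hY)).Homotopic (.id _) := by
  refine homotopic_of_forall_exists_common_simplex _ _ fun y ↦ ?_
  obtain ⟨hy, σ, hσ, hyσ⟩ := mem_geomRel_iff.1 y.2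
  refine ⟨σ, hσ, fun v hv ↦ hyσ ?_, hyσ⟩
  obtain ⟨τ, hτ, hvτ⟩ := exists_mem_support_of_barycentricMap_ne_zero hv
  exact ((isSuperlevel_of_mem_support_superlevelMap hy.1 hτ).2 v hvτ).1.ne'

/-- The realization of the barycentric subdivision is homotopy equivalent to that of `Y`. -/
noncomputable def barycentricSubdivisionHomotopyEquiv (hY : IsComplex Y) :
    ContinuousMap.HomotopyEquiv (geomRel (barycentricSubdivision Y)) (geomRel Y) where
  toFun := fromSubdivision Y
  invFun := toSubdivision hY
  left_inv := toSubdivision_comp_fromSubdivision_homotopic hY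
  right_inv := fromSubdivision_comp_toSubdivision_homotopic hY

end BarycentricSubdivision

namespace IsComplex

variable {X : Set (Finset V)}

lemma induce (hX : IsComplex X) (S : Finset V) : IsComplex (induce X S) :=
  fun σ hσ τ hτ ↦ ⟨hX σ hσ.1 τ hτ, hτ.trans hσ.2⟩

variable [Fintype V] [DecidableEq V]

lemma alexDual (hX : IsComplex X) : IsComplex (alexDual X) :=
  fun _ hσ _ hτ hmem ↦ hσ (hX _ hmem _ (compl_subset_compl.2 hτ))

end IsComplex

lemma isKernelRetraction_sdiff [Fintype V] [DecidableEq V] {X : Set (Finset V)}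
    (hX : IsComplex X) (K : Finset V) :
    IsKernelRetraction (· \ K) {σ | σ ∈ X ∧ ¬ (↑σ : Set V) ⊆ ↑K}
      {σ | σ ∈ induce X Kᶜ ∧ σ ≠ ∅} where
  subset := by
    rintro σ ⟨⟨hσ, hσK⟩, hne⟩
    refine ⟨hσ, fun h ↦ hne (disjoint_self_iff_empty σ |>.1 ?_)⟩
    exact (subset_compl_iff_disjoint_right.1 hσK).mono_right (coe_subset.1 h)
  mapsTo := by
    rintro σ ⟨hσ, hσK⟩
    refine ⟨⟨hX σ hσ _ sdiff_subset, sdiff_eq.trans_le inf_le_right⟩, fun h ↦ hσK ?_⟩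
    exact coe_subset.2 (sdiff_eq_empty_iff_subset.1 h)
  monotoneOn _ _ _ _ h := sdiff_subset_sdiff h subset_rfl
  le _ _ := sdiff_subset
  eqOn _ hσ := sdiff_eq_self_of_disjoint (subset_compl_iff_disjoint_right.1 hσ.1.2)

/-- **The homotopy equivalence `Z_K ≃ sd(X^∨[V \ K]) ≃ X^∨[V \ K]`** (Eq. (4.1)).
The inclusion of the barycentric subdivision `sd(X^∨[V \ K]) = Δ(X^∨[V \ K] \ {∅})`
into `Z_K = Δ(X^∨ \ X^∨[K])` is a homotopy equivalence (so in particular `Z_K` is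
homotopy equivalent to `X^∨[V \ K]`), and a retraction that is a homotopy inverse is
induced by the simplicial map sending a vertex `σ` of `Z_K` to the vertex `σ \ K`. -/
theorem sd_inclusion_homotopy_equivalence
    {V : Type} [Fintype V] [DecidableEq V]
    (X : Set (Finset V)) (hX : IsComplex X) (K : Finset V) :
    ∃ hsub : geomRel (orderComplex {σ : Finset V | σ ∈ induce (alexDual X) Kᶜ ∧ σ ≠ ∅}) ⊆
        geomRel (ZComplex X (↑K : Set V)),
      (∃ h : ContinuousMap.HomotopyEquiv
            ↥(geomRel (orderComplex {σ : Finset V | σ ∈ induce (alexDual X) Kᶜ ∧ σ ≠ ∅}))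
            ↥(geomRel (ZComplex X (↑K : Set V))),
          ∀ x, ((h.toFun x : ↥(geomRel (ZComplex X (↑K : Set V)))) : Finset V → ℝ) = ↑x) ∧
      Nonempty (ContinuousMap.HomotopyEquiv
          ↥(geomRel (ZComplex X (↑K : Set V)))
          ↥(geomRel (induce (alexDual X) Kᶜ))) ∧
      ∃ r : C(↥(geomRel (ZComplex X (↑K : Set V))),
              ↥(geomRel (orderComplex {σ : Finset V | σ ∈ induce (alexDual X) Kᶜ ∧ σ ≠ ∅}))),
        (∀ x (τ : Finset V), ((r x : ↥(geomRel (orderComplex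
              {σ : Finset V | σ ∈ induce (alexDual X) Kᶜ ∧ σ ≠ ∅}))) : Finset V → ℝ) τ =
            ∑ σ ∈ Finset.univ.filter (fun σ : Finset V => σ \ K = τ),
              ((x : ↥(geomRel (ZComplex X (↑K : Set V)))) : Finset V → ℝ) σ) ∧
        (∀ y : ↥(geomRel (orderComplex {σ : Finset V | σ ∈ induce (alexDual X) Kᶜ ∧ σ ≠ ∅})),
            r ⟨↑y, hsub y.2⟩ = y) ∧
        ((ContinuousMap.mk (Set.inclusion hsub) (continuous_inclusion hsub)).comp r).Homotopic
          (ContinuousMap.id _) := by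
  have hdual := hX.alexDual
  have hretract := isKernelRetraction_sdiff hdual K
  refine ⟨hretract.geomRel_subset, ⟨hretract.homotopyEquiv, fun _ ↦ rfl⟩,
    ⟨hretract.homotopyEquiv.symm.trans
      (barycentricSubdivisionHomotopyEquiv (hdual.induce Kᶜ))⟩,
    hretract.retraction, fun x τ ↦ ?_, hretract.retraction_apply_of_mem,
    hretract.inclusion_comp_retraction_homotopic⟩
  exact FunOnFinite.linearMap_apply_apply ..
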